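/- Let (d,v,u) be an admissible triple for (λ,μ). Then I ∩ J·v·d^{−1}·u^{−1} ⊆ B·u^{−1} (as sets of roots). -/

import Mathlib

/-!
Write `γ = β·v·d⁻¹ = α·u` with `β ∈ J` and `α ∈ I`. Since `J ⊆ A`, `v ∈ W_A ∩ D_J` and `W_A`
permutes the blocks `{1,…,a}` and `{a+1,…,r}` without signs (`Wpar_blocks`), the root `β·v` is
`e_{q'} - e_{p'}` with `p' < q'` in one block; likewise `γ = e_q - e_p` with `p < q` in one block
for `b` (`exists_image`).

Because `d` and `d⁻¹` are increasing on the respective blocks, each grows at least as fast as the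
identity there (`DD_growth`). As `γ·d = β·v`, the element `d` carries the endpoints of `[p, q]` to
those of `[p', q']`, or of `[-q', -p']`, and comparing the two growth bounds shows that it is a
translation between these intervals. Thus every simple root `e_{j+1} - e_j` with `p' ≤ j < q'` lies
in `B·d ∩ A`, and `v⁻¹ ∈ D_{B·d ∩ A}` is increasing on `[p', q']`. It takes the endpoints to
consecutive integers, because `β` is simple; hence `q' = p' + 1`, so `q = p + 1` and `γ ∈ B`.
-/

/- The hyperoctahedral group `W_r` (the Weyl group of type `B_r`), realized as the group
of permutations `w` of `{±1, …, ±r}` satisfying `(−i)w = −(iw)`.  We realize its elements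
inside `Equiv.Perm ℤ`, letting `w` act on `i` on the *right* via `i·w := w⁻¹ i` (so that
`i·(wd) = (i·w)·d` and products of group elements can be written in the same order as in
the paper). -/

namespace QQS

abbrev G : Type := Equiv.Perm ℤ

/-- The generators `s₀ = (1,−1)` and `sᵢ = (i,i+1)(−i,−i−1)`. -/
def s (i : ℕ) : G :=
  if i = 0 then Equiv.swap 1 (-1)
  else Equiv.swap (i : ℤ) ((i : ℤ) + 1) * Equiv.swap (-(i : ℤ)) (-((i : ℤ) + 1))

/-- The generating set `{s₀, s₁, …, s_{r−1}}` of `W_r`. -/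
def gens (r : ℕ) : Set G := {x | ∃ i, i < r ∧ x = s i}

/-- Membership in `W_r`: permutations of `{±1, …, ±r}` commuting with negation. -/
def inW (r : ℕ) (w : G) : Prop :=
  (∀ i : ℤ, w (-i) = -(w i)) ∧ ∀ i : ℤ, (r : ℤ) < |i| → w i = i

/-- The length `ℓ(w)` of `w ∈ W_r` with respect to the generators `s₀, …, s_{r−1}`. -/
noncomputable def len (r : ℕ) (w : G) : ℕ :=
  sInf {n | ∃ l : List G, l.length = n ∧ (∀ x ∈ l, x ∈ gens r) ∧ l.prod = w}

/-- The partial sum of the first `k` parts of a composition. -/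
def psum (l : List ℕ) (k : ℕ) : ℕ := (l.take k).sum

end QQS
namespace QQS

/- The root system of type `B_r`.  `W_r` acts on the vector space `V` with basis
`e₁, …, e_r`; we realize a vector `x = ∑ xᵢ eᵢ ∈ V` as the odd function `ℤ → ℚ` with
value `xᵢ` at `i` and `−xᵢ` at `−i`.  The (right) action of `w` on `V` determined by
`eᵢ·w = e_{i·w}` if `i·w > 0` and `eᵢ·w = −e_{−(i·w)}` if `i·w < 0` then becomes
`x·w = x ∘ w`. -/

/-- The basis vector `eᵢ`, as an odd function `ℤ → ℚ`. -/
def evec (i : ℕ) : ℤ → ℚ := fun j => if j = (i : ℤ) then 1 else if j = -(i : ℤ) then -1 else 0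

/-- The simple roots: `α₀ = e₁` and `αᵢ = e_{i+1} − eᵢ` for `i ≥ 1`. -/
def sroot : ℕ → (ℤ → ℚ)
  | 0 => evec 1
  | i + 1 => evec (i + 2) - evec (i + 1)

/-- `Δ₀ = {α₀, α₁, …, α_{r−1}}`. -/
def Delta0 (r : ℕ) : Set (ℤ → ℚ) := {x | ∃ i, i < r ∧ x = sroot i}

/-- `Δ = Δ₀ ∖ {α₀}`. -/
def DeltaS (r : ℕ) : Set (ℤ → ℚ) := Delta0 r \ {sroot 0}

/-- The right action of `w ∈ W_r` on `V`: `x·w = x ∘ w`. -/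
def rAct (w : G) (x : ℤ → ℚ) : ℤ → ℚ := fun j => x (w j)

/-- `x` is a positive root: `eᵢ`, `eᵢ + eⱼ` or `eⱼ − eᵢ` with `1 ≤ i < j ≤ r`. -/
def isPos (r : ℕ) (x : ℤ → ℚ) : Prop :=
  (∃ i, 1 ≤ i ∧ i ≤ r ∧ x = evec i) ∨
  (∃ i j, 1 ≤ i ∧ i < j ∧ j ≤ r ∧ (x = evec i + evec j ∨ x = evec j - evec i))

/-- `D_K = {d ∈ W_r : α·d is a positive root for every α ∈ K}`. -/
def DD (r : ℕ) (K : Set (ℤ → ℚ)) : Set G :=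
  {d | inW r d ∧ ∀ α ∈ K, isPos r (rAct d α)}

/-- `D_{K,L} = D_K ∩ D_L⁻¹`. -/
def DDd (r : ℕ) (K L : Set (ℤ → ℚ)) : Set G := {d | d ∈ DD r K ∧ d⁻¹ ∈ DD r L}

/-- For `M ⊆ Δ₀`, the parabolic subgroup `W_M`, generated by the reflections `s_α`
for `α ∈ M` (the reflection in the hyperplane orthogonal to `αᵢ` is `sᵢ`). -/
def Wpar (r : ℕ) (M : Set (ℤ → ℚ)) : Subgroup G :=
  Subgroup.closure {w | ∃ i, i < r ∧ sroot i ∈ M ∧ w = s i}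

/-- `D^M_{K,L} = D_K ∩ D_L⁻¹ ∩ W_M`. -/
def DDm (r : ℕ) (K L M : Set (ℤ → ℚ)) : Set G := {d | d ∈ DDd r K L ∧ d ∈ Wpar r M}

end QQS
namespace QQS

/- Fix an `a`-bicomposition `λ = (l1, l2)` and a `b`-bicomposition `μ = (m1, m2)` in
`Λ(n,r)`.  The sets of simple roots `J, I ⊆ Δ`, and `Ã, B̃, A, B ⊆ Δ₀`. -/

/-- `j` is a partial sum of the composition `l`. -/
def isPartialSum (l : List ℕ) (j : ℕ) : Prop := ∃ k, psum l k = j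

/-- `{α_{off+j} : 1 ≤ j ≤ l.sum − 1, j not a partial sum of l}`. -/
def compRoots (off : ℕ) (l : List ℕ) : Set (ℤ → ℚ) :=
  {x | ∃ j, 1 ≤ j ∧ j + 1 ≤ l.sum ∧ ¬ isPartialSum l j ∧ x = sroot (off + j)}

/-- `J = J₁ ∪ J₂ ⊆ Δ` associated to the bicomposition `(l1, l2)`. -/
def Jset (l1 l2 : List ℕ) : Set (ℤ → ℚ) := compRoots 0 l1 ∪ compRoots l1.sum l2

/-- `Ã = Δ₀ ∖ {α_a}` if `a ≠ r`, and `Ã = Δ₀` if `a = r`. -/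
def Atil (r a : ℕ) : Set (ℤ → ℚ) := if a = r then Delta0 r else Delta0 r \ {sroot a}

/-- `A = Ã ∖ {α₀}`. -/
def Aset (r a : ℕ) : Set (ℤ → ℚ) := Atil r a \ {sroot 0}

/-- An admissible triple `(d, v, u)` for `(λ, μ)`: `d ∈ D_{B̃,Ã}`,
`v ∈ D^A_{J, B·d ∩ A}` and `u ∈ D^B_{I, B ∩ J·v·d⁻¹}`. -/
def Admissible (r a b : ℕ) (l1 l2 m1 m2 : List ℕ) (d v u : G) : Prop :=
  d ∈ DDd r (Atil r b) (Atil r a) ∧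
  v ∈ DDm r (Jset l1 l2) ((rAct d '' Aset r b) ∩ Aset r a) (Aset r a) ∧
  u ∈ DDm r (Jset m1 m2) (Aset r b ∩ (rAct d⁻¹ '' (rAct v '' Jset l1 l2))) (Aset r b)

end QQS
namespace QQS

/-! ### Simple roots in signed coordinates -/

/-- The vector `e_x` for a signed index `x`, with `e_{-x} = -e_x` for `x ≠ 0`.
At `x = 0` the value is a junk nonzero function. -/
def ev (x : ℤ) : ℤ → ℚ := fun j => if j = x then 1 else if j = -x then -1 else 0

theorem evec_eq (i : ℕ) : evec i = ev i := rfl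

theorem sroot_eq {i : ℕ} (hi : 1 ≤ i) : sroot i = ev ((i : ℤ) + 1) - ev i := by
  obtain ⟨k, rfl⟩ : ∃ k, i = k + 1 := ⟨i - 1, by omega⟩
  simp only [sroot, evec_eq]
  push_cast
  congr 2

theorem sroot_ne_zero {i : ℕ} (hi : 1 ≤ i) : sroot i ≠ sroot 0 := by
  intro h
  have h1 := congrFun h ((i : ℤ) + 1)
  have h2 := congrFun h (i : ℤ)
  rw [sroot_eq hi] at h1 h2
  simp only [sroot, evec_eq, ev, Pi.sub_apply] at h1 h2
  grind

theorem sroot_inj {i j : ℕ} (h : sroot i = sroot j) : i = j := by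
  rcases Nat.eq_zero_or_pos i with rfl | hi
  · by_contra hj
    exact sroot_ne_zero (by omega) h.symm
  rcases Nat.eq_zero_or_pos j with rfl | hj
  · exact absurd h (sroot_ne_zero hi)
  have h1 := congrFun h ((i : ℤ) + 1)
  have h2 := congrFun h (i : ℤ)
  rw [sroot_eq hi, sroot_eq hj] at h1 h2
  simp only [ev, Pi.sub_apply] at h1 h2
  grind

theorem mem_Aset {r a : ℕ} {x : ℤ → ℚ} :
    x ∈ Aset r a ↔ ∃ i, 1 ≤ i ∧ i < r ∧ i ≠ a ∧ x = sroot i := by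
  constructor
  · rintro ⟨hx, h0⟩
    have key : ∃ i, i < r ∧ i ≠ a ∧ x = sroot i := by
      unfold Atil at hx
      split_ifs at hx with har
      · obtain ⟨i, hi, rfl⟩ := hx
        exact ⟨i, hi, by omega, rfl⟩
      · obtain ⟨⟨i, hi, rfl⟩, hne⟩ := hx
        exact ⟨i, hi, fun h => hne (by simp [h]), rfl⟩
    obtain ⟨i, hi, hia, rfl⟩ := key
    exact ⟨i, Nat.pos_of_ne_zero fun h => h0 (by simp [h]), hi, hia, rfl⟩
  · rintro ⟨i, h1, hr, ha, rfl⟩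
    refine ⟨?_, sroot_ne_zero h1⟩
    unfold Atil
    split_ifs
    · exact ⟨i, hr, rfl⟩
    · exact ⟨⟨i, hr, rfl⟩, fun h => ha (sroot_inj h)⟩

theorem Jset_subset {r : ℕ} {l1 l2 : List ℕ} (h : l1.sum + l2.sum = r) :
    Jset l1 l2 ⊆ Aset r l1.sum := by
  rintro x (⟨j, h1, h2, -, rfl⟩ | ⟨j, h1, h2, -, rfl⟩) <;>
  exact mem_Aset.2 ⟨_, by omega, by omega, by omega, rfl⟩

/-! ### The action on roots and positivity -/

theorem inW_inv {r : ℕ} {w : G} (hw : inW r w) (x : ℤ) : w⁻¹ (-x) = -(w⁻¹ x) := by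
  rw [Equiv.Perm.inv_eq_iff_eq, hw.1]
  simp

theorem rAct_ev {r : ℕ} {w : G} (hw : inW r w) (x : ℤ) : rAct w (ev x) = ev (w⁻¹ x) := by
  funext j
  simp only [rAct, ev, ← inW_inv hw, Equiv.Perm.eq_inv_iff_eq]

theorem rAct_sub_ev {r : ℕ} {w : G} (hw : inW r w) (x y : ℤ) :
    rAct w (ev x - ev y) = ev (w⁻¹ x) - ev (w⁻¹ y) := by
  rw [← rAct_ev hw, ← rAct_ev hw]
  rfl

theorem lt_of_isPos {r : ℕ} {x y : ℤ} (hx : x ≠ 0) (hy : y ≠ 0) (h1 : x ≠ y) (h2 : x ≠ -y)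
    (h : isPos r (ev x - ev y)) : y < x := by
  have ex : (ev x - ev y) x = 1 := by simp only [ev, Pi.sub_apply]; grind
  have ey : (ev x - ev y) y = -1 := by simp only [ev, Pi.sub_apply]; grind
  rcases h with ⟨i, hi, -, h⟩ | ⟨i, j, hi, hij, -, h | h⟩ <;> rw [h] at ex ey <;>
    simp only [evec_eq, ev, Pi.sub_apply, Pi.add_apply] at ex ey <;> grind

theorem inv_lt_of_isPos {r : ℕ} {w : G} (hw : inW r w) {x : ℤ} (hx : 1 ≤ x)
    (h : isPos r (rAct w (ev (x + 1) - ev x))) : w⁻¹ x < w⁻¹ (x + 1) := by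
  rw [rAct_sub_ev hw] at h
  have h0 : w⁻¹ 0 = 0 := by have := inW_inv hw 0; simp only [neg_zero] at this; omega
  refine lt_of_isPos ?_ ?_ ?_ ?_ h
  · rw [← h0]; exact fun e => by have := w⁻¹.injective e; omega
  · rw [← h0]; exact fun e => by have := w⁻¹.injective e; omega
  · exact fun e => by have := w⁻¹.injective e; omega
  · rw [← inW_inv hw]; exact fun e => by have := w⁻¹.injective e; omega

/-- A vector `e_x - e_y` with `x ≠ y` determines `(x, y)` up to `(x, y) ↦ (-y, -x)`. -/
theorem ev_sub_inj {x y x' y' : ℤ} (h1 : x ≠ y)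
    (h : ev x' - ev y' = ev x - ev y) : (x' = x ∧ y' = y) ∨ (x' = -y ∧ y' = -x) := by
  have ex := congrFun h x
  have ey := congrFun h y
  simp only [ev, Pi.sub_apply] at ex ey
  grind

/-! ### Blocks and distinguished elements -/

/-- `x` and `y` lie in a common block of the partition `{1,…,a} ⊔ {a+1,…,r}`. -/
def SameBlock (r a : ℕ) (x y : ℤ) : Prop :=
  (1 ≤ x ∧ x ≤ a ∧ 1 ≤ y ∧ y ≤ a) ∨ (a < x ∧ x ≤ r ∧ a < y ∧ y ≤ r)

/-- `W_A` consists of permutations that stabilize both blocks `{1,…,a}` and `{a+1,…,r}`. -/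
theorem Wpar_blocks {r a : ℕ} {w : G} (hw : w ∈ Wpar r (Aset r a)) (x : ℤ) :
    ((1 ≤ w x ∧ w x ≤ a) ↔ (1 ≤ x ∧ x ≤ a)) ∧ ((a < w x ∧ w x ≤ r) ↔ (a < x ∧ x ≤ r)) := by
  induction hw using Subgroup.closure_induction generalizing x with
  | mem g hg =>
    obtain ⟨i, hi, hm, rfl⟩ := hg
    obtain ⟨k, h1, hr, ha, hk⟩ := mem_Aset.1 hm
    obtain rfl := sroot_inj hk
    have : i ≠ 0 := by omega
    simp only [s, this, if_false, Equiv.Perm.mul_apply, Equiv.swap_apply_def]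
    split_ifs <;> omega
  | one => simp
  | mul g h _ _ ihg ihh =>
    rw [Equiv.Perm.mul_apply]
    exact ⟨(ihg _).1.trans (ihh _).1, (ihg _).2.trans (ihh _).2⟩
  | inv g _ ih =>
    have h := ih (g⁻¹ x)
    have e : g (g⁻¹ x) = x := by simp
    rw [e] at h
    exact ⟨h.1.symm, h.2.symm⟩

theorem SameBlock.inv {r a : ℕ} {w : G} (hw : w ∈ Wpar r (Aset r a)) {x y : ℤ}
    (h : SameBlock r a x y) : SameBlock r a (w⁻¹ x) (w⁻¹ y) := by
  obtain ⟨h1, h2⟩ := Wpar_blocks (inv_mem hw) x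
  obtain ⟨h3, h4⟩ := Wpar_blocks (inv_mem hw) y
  rcases h with ⟨a1, a2, a3, a4⟩ | ⟨a1, a2, a3, a4⟩
  · exact Or.inl ⟨(h1.2 ⟨a1, a2⟩).1, (h1.2 ⟨a1, a2⟩).2, (h3.2 ⟨a3, a4⟩).1, (h3.2 ⟨a3, a4⟩).2⟩
  · exact Or.inr ⟨(h2.2 ⟨a1, a2⟩).1, (h2.2 ⟨a1, a2⟩).2, (h4.2 ⟨a3, a4⟩).1, (h4.2 ⟨a3, a4⟩).2⟩

/-- An integer sequence increasing at every step grows at least as fast as its index. -/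
theorem add_sub_le {f : ℤ → ℤ} {p q : ℤ} (h : ∀ i, p ≤ i → i < q → f i < f (i + 1))
    {x y : ℤ} (hp : p ≤ x) (hxy : x ≤ y) (hq : y ≤ q) : f x + (y - x) ≤ f y := by
  induction y, hxy using Int.leInduction with
  | base => simp
  | succ y hy ih =>
    have := ih (by omega)
    have := h y (by omega) (by omega)
    omega

theorem root_mem_Aset {r a : ℕ} (har : a ≤ r) {x : ℤ} (h : SameBlock r a x (x + 1)) :
    ev (x + 1) - ev x ∈ Aset r a := by
  unfold SameBlock at h
  obtain ⟨k, rfl⟩ : ∃ k : ℕ, x = k := ⟨x.toNat, by omega⟩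
  exact mem_Aset.2 ⟨k, by omega, by omega, by omega, (sroot_eq (by omega)).symm⟩

/-- A distinguished element is increasing on each block, hence grows there at least like the
identity. -/
theorem DD_growth {r a : ℕ} (har : a ≤ r) {d : G} (hd : d ∈ DD r (Atil r a)) {p q x y : ℤ}
    (h : SameBlock r a p q) (hp : p ≤ x) (hxy : x ≤ y) (hq : y ≤ q) :
    d⁻¹ x + (y - x) ≤ d⁻¹ y := by
  refine add_sub_le (f := fun z => d⁻¹ z) (fun i hi hi' => ?_) hp hxy hq
  unfold SameBlock at h
  refine inv_lt_of_isPos hd.1 (by omega) (hd.2 _ (root_mem_Aset har ?_).1)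
  unfold SameBlock
  omega

/-- If `K ⊆ A` and `w ∈ W_A ∩ D_K`, then `w` sends a simple root in `K` to a root `e_q - e_p` with
`p < q` in a common block. -/
theorem exists_image {r a : ℕ} {K : Set (ℤ → ℚ)} (hK : K ⊆ Aset r a) {w : G}
    (hw : w ∈ Wpar r (Aset r a)) (hD : w ∈ DD r K) {x : ℤ → ℚ} (hx : x ∈ K) :
    ∃ k : ℤ, SameBlock r a (w⁻¹ k) (w⁻¹ (k + 1)) ∧ w⁻¹ k < w⁻¹ (k + 1) ∧
      rAct w x = ev (w⁻¹ (k + 1)) - ev (w⁻¹ k) := by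
  obtain ⟨k, h1, hr, ha, rfl⟩ := mem_Aset.1 (hK hx)
  have hp := hD.2 _ hx
  rw [sroot_eq h1] at hp ⊢
  refine ⟨k, SameBlock.inv hw ?_, inv_lt_of_isPos hD.1 (by omega) hp, rAct_sub_ev hD.1 _ _⟩
  unfold SameBlock
  omega

/-- Let `(d,v,u)` be an admissible triple for `(λ,μ)`.  Then `I ∩ J·v·d⁻¹·u⁻¹ ⊆ B·u⁻¹` (as sets of roots). -/
theorem I_inter_Jvdu_subset (n r a b : ℕ) (l1 l2 m1 m2 : List ℕ)
    (hla : l1.sum = a) (hlr : l1.sum + l2.sum = r) (hln : l1.length + l2.length = n)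
    (hmb : m1.sum = b) (hmr : m1.sum + m2.sum = r) (hmn : m1.length + m2.length = n)
    (d v u : G) (hadm : Admissible r a b l1 l2 m1 m2 d v u) :
    Jset m1 m2 ∩ (rAct u⁻¹ '' (rAct d⁻¹ '' (rAct v '' Jset l1 l2))) ⊆ rAct u⁻¹ '' Aset r b := by
  subst hla hmb
  obtain ⟨⟨hd1, hd2⟩, ⟨⟨hv1, hv2⟩, hv3⟩, ⟨⟨hu1, -⟩, hu3⟩⟩ := hadm
  rintro α ⟨hα, _, ⟨_, ⟨β, hβ, rfl⟩, rfl⟩, rfl⟩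
  refine ⟨rAct d⁻¹ (rAct v β), ?_, rfl⟩
  set γ := rAct d⁻¹ (rAct v β) with hγ
  have hγd : rAct d γ = rAct v β := by funext j; simp [hγ, rAct]
  obtain ⟨i, hbi, hlti, hi⟩ := exists_image (Jset_subset hmr) hu3 hu1 hα
  obtain ⟨k, hbk, hltk, hk⟩ := exists_image (Jset_subset hlr) hv3 hv1 hβ
  have hγi : γ = ev (u⁻¹ (i + 1)) - ev (u⁻¹ i) := by
    rw [← hi]; funext j; simp [rAct]
  have hvp : v (v⁻¹ k) = k := by simp
  have hvq : v (v⁻¹ (k + 1)) = k + 1 := by simp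
  generalize u⁻¹ i = p at *
  generalize u⁻¹ (i + 1) = q at *
  generalize v⁻¹ k = p' at *
  generalize v⁻¹ (k + 1) = q' at *
  have hE : ∀ x, d (d⁻¹ x) = x := fun x => by simp
  -- Both cases below give a step `j ↦ j + 1` in `[p', q']` as the `d`-image of a step in `[p, q]`.
  suffices hlen : q - p = q' - p' ∧ ∀ j, p' ≤ j → j < q' → ∃ x, p ≤ x ∧ x < q ∧
      rAct d (ev (x + 1) - ev x) = ev (j + 1) - ev j by
    obtain ⟨hlen, hstep⟩ := hlen
    -- `v⁻¹` is increasing on `[p', q']`, with end values `k` and `k + 1`.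
    have hgrow := add_sub_le (f := fun z => v z) (p := p') (q := q') (fun j hj hj' => by
      obtain ⟨x, hx, hx', he⟩ := hstep j hj hj'
      have hpos := inv_lt_of_isPos (x := j) hv2.1 (by unfold SameBlock at hbk; omega)
        (hv2.2 _ ⟨⟨_, root_mem_Aset (by omega) (x := x) ?_, he⟩,
          root_mem_Aset (by omega) (x := j) ?_⟩)
      · simpa using hpos
      · unfold SameBlock at *; omega
      · unfold SameBlock at *; omega) le_rfl hltk.le le_rfl
    simp only [hvp, hvq] at hgrow
    obtain rfl : q = p + 1 := by omega
    rw [hγi]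
    exact root_mem_Aset (by omega) hbi
  rw [hγi, rAct_sub_ev hd1.1, hk] at hγd
  have g1 := DD_growth (by omega) hd1 hbi le_rfl hlti.le le_rfl
  have g2 := DD_growth (by omega) hd2 hbk le_rfl hltk.le le_rfl
  simp only [inv_inv] at g2
  rcases ev_sub_inj (by omega) hγd with ⟨hq, hp⟩ | ⟨hq, hp⟩
  · have e1 : d p' = p := by rw [← hp, hE]
    have e2 : d q' = q := by rw [← hq, hE]
    have hlen : q - p = q' - p' := by omega
    have hval : ∀ x, p ≤ x → x ≤ q → d⁻¹ x = p' + (x - p) := fun x hx hx' => by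
      have := DD_growth (by omega) hd1 hbi le_rfl hx hx'
      have := DD_growth (by omega) hd1 hbi hx hx' le_rfl
      omega
    refine ⟨hlen, fun j hj hj' => ⟨p + (j - p'), by omega, by omega, ?_⟩⟩
    rw [rAct_sub_ev hd1.1, hval _ (by omega) (by omega), hval _ (by omega) (by omega)]
    congr 2 <;> ring
  · have e1 : d p' = -q := by
      rw [← neg_neg p', ← hq, hd1.1.1, hE]
    have e2 : d q' = -p := by
      rw [← neg_neg q', ← hp, hd1.1.1, hE]
    have hlen : q - p = q' - p' := by omega
    have hval : ∀ x, p ≤ x → x ≤ q → d⁻¹ x = -q' + (x - p) := fun x hx hx' => by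
      have := DD_growth (by omega) hd1 hbi le_rfl hx hx'
      have := DD_growth (by omega) hd1 hbi hx hx' le_rfl
      omega
    -- On this block `d` reverses signs, so the steps are traversed backwards.
    refine ⟨hlen, fun j hj hj' => ⟨p + (q' - 1 - j), by omega, by omega, ?_⟩⟩
    rw [rAct_sub_ev hd1.1, hval _ (by omega) (by omega), hval _ (by omega) (by omega)]
    have hp0 : 0 < p' := by unfold SameBlock at hbk; omega
    funext z
    simp only [ev, Pi.sub_apply]
    grind

end QQS
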